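/- arXiv:math/0403467 — 2 statements merged into one kernel-verified Lean document; each statement's English description precedes it below -/
import Mathlib

section
/- Let A and B be real n×n stable matrices. Then the pair (A,B) does NOT have a common quadratic Lyapunov function if and only if there exist nonzero real positive semidefinite symmetric n×n matrices X and Y such that A·X + X·Aᵀ + B·Y + Y·Bᵀ = 0. -/
open Matrix

/-- A real square matrix is *stable* if every eigenvalue (over ℂ) has negative real part. -/
def IsStable {n : ℕ} (A : Matrix (Fin n) (Fin n) ℝ) : Prop :=
  ∀ μ : ℂ, μ ∈ spectrum ℂ (A.map (algebraMap ℝ ℂ)) → μ.re < 0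

/-- `(A,B)` has a common quadratic Lyapunov function: a real symmetric positive definite `P`
with `P·A + Aᵀ·P` and `P·B + Bᵀ·P` both negative definite. -/
def HasCQLF {n : ℕ} (A B : Matrix (Fin n) (Fin n) ℝ) : Prop :=
  ∃ P : Matrix (Fin n) (Fin n) ℝ,
    P.PosDef ∧ (-(P * A + Aᵀ * P)).PosDef ∧ (-(P * B + Bᵀ * P)).PosDef

/-!
Let `L A X = A X + X Aᵀ`. The trace pairing identifies the adjoint of `L A` with `P ↦ P A + Aᵀ P`,
and the cone of positive semidefinite matrices is self-dual for it. Separating `0` from the compact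
convex image of the trace-one base of a product of such cones therefore gives an alternative: either
some symmetric `P` makes both `P A + Aᵀ P` and `P B + Bᵀ P` negative definite, or
`L A X + L B Y = 0` for some positive semidefinite `X`, `Y` that are not both zero. For stable `A`
such a `P` is automatically positive definite: take a positive definite solution `P₀` of the
Lyapunov inequality and the largest `c` with `P - c P₀ ≥ 0`; testing both inequalities on a kernel
vector of `P - c P₀` shows `c > 0`. Neither `X` nor `Y` can vanish alone: if `X` is positive
semidefinite and `L A X = 0`, then `ker X` is invariant under `Aᵀ`, and an eigenvector of `Aᵀ` on
the quotient by `ker X` with eigenvalue `μ` satisfies `2 (re μ) y⋆ X y = 0` with `y⋆ X y > 0`.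
-/

open scoped ComplexOrder

variable {ι κ : Type*} [Fintype ι] [Fintype κ]

section TracePairing

variable {𝕜 K : Type*} [RCLike 𝕜] [Field K]

theorem trace_mul_vecMulVec_star (Q : Matrix ι ι 𝕜) (x : ι → 𝕜) :
    (Q * vecMulVec x (star x)).trace = star x ⬝ᵥ Q *ᵥ x := by
  rw [mul_vecMulVec, trace_vecMulVec, dotProduct_comm]

theorem posDef_iff_forall_trace_mul_pos {Q : Matrix ι ι 𝕜} (hQ : Q.IsHermitian) :
    Q.PosDef ↔ ∀ X : Matrix ι ι 𝕜, X.PosSemidef → X ≠ 0 → 0 < (Q * X).trace := by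
  refine ⟨fun hQ X hX hX0 => ?_, fun h => .of_dotProduct_mulVec_pos hQ fun x hx => ?_⟩
  · obtain ⟨m, v, rfl⟩ := posSemidef_iff_eq_sum_vecMulVec.1 hX
    obtain ⟨i, hi⟩ : ∃ i, v i ≠ 0 := by
      by_contra! hv
      simp [hv] at hX0
    simp only [Matrix.mul_sum, trace_sum, trace_mul_vecMulVec_star]
    exact Finset.sum_pos' (fun j _ => hQ.posSemidef.dotProduct_mulVec_nonneg (v j))
      ⟨i, Finset.mem_univ i, hQ.dotProduct_mulVec_pos hi⟩
  · rw [← trace_mul_vecMulVec_star]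
    exact h _ (posSemidef_vecMulVec_self_star x) (by simpa [vecMulVec_eq_zero] using hx)

theorem exists_forall_eq_trace_mul {m : Type*} [Fintype m] (f : Module.Dual K (Matrix ι m K)) :
    ∃ G : Matrix m ι K, ∀ M, f M = (G * M).trace := by
  let pairing : Matrix m ι K →ₗ[K] Module.Dual K (Matrix ι m K) :=
    LinearMap.mk₂ K (fun G M => (G * M).trace) (fun G H M => by rw [Matrix.add_mul, trace_add])
      (fun c G M => by rw [Matrix.smul_mul, trace_smul])
      (fun G M N => by rw [Matrix.mul_add, trace_add])
      (fun c G M => by rw [Matrix.mul_smul, trace_smul])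
  have hinj : Function.Injective pairing := fun G H hGH =>
    ext_iff_trace_mul_right.2 fun M => LinearMap.congr_fun hGH M
  have hsurj : Function.Surjective pairing :=
    (LinearMap.injective_iff_surjective_of_finrank_eq_finrank
      (by rw [Subspace.dual_finrank_eq, Module.finrank_matrix, Module.finrank_matrix,
        mul_comm (Fintype.card m)])).1 hinj
  obtain ⟨G, rfl⟩ := hsurj f
  exact ⟨G, fun M => rfl⟩

theorem exists_isSymm_forall_eq_trace_mul [NeZero (2 : K)] (f : Module.Dual K (Matrix ι ι K)) :
    ∃ P : Matrix ι ι K, P.IsSymm ∧ ∀ M : Matrix ι ι K, M.IsSymm → f M = (P * M).trace := by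
  obtain ⟨G, hG⟩ := exists_forall_eq_trace_mul f
  refine ⟨(2⁻¹ : K) • (G + Gᵀ), ((isSymm_add_transpose_self G).smul _), fun M hM => ?_⟩
  have hGt : (Gᵀ * M).trace = (G * M).trace := by
    rw [← trace_transpose, transpose_mul, transpose_transpose, hM.eq, trace_mul_comm]
  rw [hG, smul_mul, trace_smul, add_mul, trace_add, hGt, ← two_mul, smul_eq_mul,
    inv_mul_cancel_left₀ two_ne_zero]

end TracePairing

section LyapunovMap

variable {R : Type*} [CommRing R]

/-- The Lyapunov operator `X ↦ A X + X Aᵀ`. Its adjoint for the trace pairing is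
`P ↦ P A + Aᵀ P`, the expression occurring in the definition of a quadratic Lyapunov function. -/
def lyapunovMap (A : Matrix ι ι R) : Matrix ι ι R →ₗ[R] Matrix ι ι R :=
  LinearMap.mulLeft R A + LinearMap.mulRight R Aᵀ

theorem lyapunovMap_apply (A X : Matrix ι ι R) : lyapunovMap A X = A * X + X * Aᵀ :=
  rfl

theorem trace_mul_lyapunovMap (P A X : Matrix ι ι R) :
    (P * lyapunovMap A X).trace = ((P * A + Aᵀ * P) * X).trace := by
  rw [lyapunovMap_apply, mul_add, add_mul, trace_add, trace_add, ← mul_assoc, ← mul_assoc,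
    trace_mul_comm (P * X), mul_assoc Aᵀ]

theorem isSymm_lyapunovMap (A : Matrix ι ι R) {X : Matrix ι ι R} (hX : X.IsSymm) :
    (lyapunovMap A X).IsSymm := by
  simp [IsSymm, lyapunovMap_apply, hX.eq, add_comm]

end LyapunovMap

section Base

open scoped MatrixOrder in
theorem exists_eq_conjTranspose_mul_self {𝕜 : Type*} [RCLike 𝕜] {X : Matrix ι ι 𝕜}
    (hX : X.PosSemidef) : ∃ M : Matrix ι ι 𝕜, X = Mᴴ * M := by
  classical
  exact CStarAlgebra.nonneg_iff_eq_star_mul_self.1 hX.nonneg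

/-- The trace-one base of the cone of families of positive semidefinite matrices. -/
def posSemidefBase (κ ι : Type*) [Fintype κ] [Fintype ι] : Set (κ → Matrix ι ι ℝ) :=
  {X | (∀ k, (X k).PosSemidef) ∧ ∑ k, (X k).trace = 1}

theorem convex_posSemidefBase : Convex ℝ (posSemidefBase κ ι) := by
  rintro X ⟨hX, hXtr⟩ Y ⟨hY, hYtr⟩ a b ha hb hab
  refine ⟨fun k => ((hX k).smul ha).add ((hY k).smul hb), ?_⟩
  simp only [Pi.add_apply, Pi.smul_apply, trace_add, trace_smul, smul_eq_mul,
    Finset.sum_add_distrib, ← Finset.mul_sum, hXtr, hYtr, mul_one, hab]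

theorem isCompact_setOf_posSemidef_trace_le_one :
    IsCompact {X : Matrix ι ι ℝ | X.PosSemidef ∧ X.trace ≤ 1} := by
  let _ : NormedAddCommGroup (Matrix ι ι ℝ) := frobeniusNormedAddCommGroup
  let _ : NormedSpace ℝ (Matrix ι ι ℝ) := frobeniusNormedSpace
  have trace_gram (M : Matrix ι ι ℝ) : (Mᴴ * M).trace = ‖M‖ ^ 2 := by
    rw [frobenius_norm_def, ← Real.sqrt_eq_rpow, Real.sq_sqrt (by positivity), Finset.sum_comm]
    simp [trace, mul_apply, pow_two]
  have image_ball : {X : Matrix ι ι ℝ | X.PosSemidef ∧ X.trace ≤ 1} =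
      (fun M => Mᴴ * M) '' Metric.closedBall 0 1 := by
    ext X
    constructor
    · rintro ⟨hX, htr⟩
      obtain ⟨M, rfl⟩ := exists_eq_conjTranspose_mul_self hX
      rw [trace_gram, sq_le_one_iff₀ (norm_nonneg M)] at htr
      exact ⟨M, mem_closedBall_zero_iff.2 htr, rfl⟩
    · rintro ⟨M, hM, rfl⟩
      rw [mem_closedBall_zero_iff] at hM
      exact ⟨posSemidef_conjTranspose_mul_self M,
        (trace_gram M).trans_le (pow_le_one₀ (norm_nonneg M) hM)⟩
  have := FiniteDimensional.proper ℝ (Matrix ι ι ℝ)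
  rw [image_ball]
  exact (isCompact_closedBall 0 1).image (by fun_prop)

theorem isCompact_posSemidefBase : IsCompact (posSemidefBase κ ι) := by
  have hbox : IsCompact (Set.univ.pi fun _ : κ =>
      {X : Matrix ι ι ℝ | X.PosSemidef ∧ X.trace ≤ 1}) :=
    isCompact_univ_pi fun _ => isCompact_setOf_posSemidef_trace_le_one
  have hplane : IsClosed {X : κ → Matrix ι ι ℝ | ∑ k, (X k).trace = 1} :=
    isClosed_eq (by fun_prop) continuous_const
  convert hbox.inter_right hplane using 1
  ext X
  refine ⟨fun ⟨hX, htr⟩ => ⟨fun k _ => ⟨hX k, ?_⟩, htr⟩, fun ⟨hX, htr⟩ =>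
    ⟨fun k => (hX k trivial).1, htr⟩⟩
  exact htr ▸ Finset.single_le_sum (fun j _ => (hX j).trace_nonneg) (Finset.mem_univ k)

end Base

section Alternative

/-- `P` solves the strict Lyapunov inequality `P A + Aᵀ P < 0`. Nothing is assumed about `P` itself:
symmetry and positivity are separate hypotheses or conclusions. -/
def IsLyapunov (A P : Matrix ι ι ℝ) : Prop :=
  (-(P * A + Aᵀ * P)).PosDef

/-- The linear map `X ↦ ∑ k, (A k * X k + X k * (A k)ᵀ)` on families of matrices. The image of a
family of positive semidefinite cones under it is the cone that Hahn–Banach separates from `0`. -/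
def sumLyapunovMap (A : κ → Matrix ι ι ℝ) : (κ → Matrix ι ι ℝ) →ₗ[ℝ] Matrix ι ι ℝ :=
  ∑ k, lyapunovMap (A k) ∘ₗ LinearMap.proj k

theorem sumLyapunovMap_apply (A X : κ → Matrix ι ι ℝ) :
    sumLyapunovMap A X = ∑ k, lyapunovMap (A k) (X k) := by
  simp [sumLyapunovMap]

theorem sumLyapunovMap_single [DecidableEq κ] (A : κ → Matrix ι ι ℝ) (k : κ) (M : Matrix ι ι ℝ) :
    sumLyapunovMap A (Pi.single k M) = lyapunovMap (A k) M := by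
  rw [sumLyapunovMap_apply, Finset.sum_eq_single k, Pi.single_eq_same]
  · exact fun j _ hj => by rw [Pi.single_eq_of_ne hj, map_zero]
  · simp

theorem isSymm_sumLyapunovMap (A : κ → Matrix ι ι ℝ) {X : κ → Matrix ι ι ℝ}
    (hX : ∀ k, (X k).IsSymm) : (sumLyapunovMap A X).IsSymm := by
  rw [sumLyapunovMap_apply, IsSymm, transpose_sum]
  exact Finset.sum_congr rfl fun k _ => isSymm_lyapunovMap (A k) (hX k)

theorem single_mem_posSemidefBase [DecidableEq κ] (k : κ) {M : Matrix ι ι ℝ} (hM : M.PosSemidef)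
    (htr : M.trace = 1) : Pi.single k M ∈ posSemidefBase κ ι := by
  refine ⟨fun j => ?_, ?_⟩
  · obtain rfl | hj := eq_or_ne j k
    · simpa only [Pi.single_eq_same] using hM
    · simpa only [Pi.single_eq_of_ne hj] using PosSemidef.zero
  · rw [Finset.sum_eq_single k, Pi.single_eq_same, htr]
    · exact fun j _ hj => by rw [Pi.single_eq_of_ne hj, trace_zero]
    · simp

theorem exists_isSymm_forall_trace_mul_neg {S : Set (Matrix ι ι ℝ)} (hS : ∀ M ∈ S, M.IsSymm)
    (hconv : Convex ℝ S) (hcomp : IsCompact S) (h0 : 0 ∉ S) :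
    ∃ P : Matrix ι ι ℝ, P.IsSymm ∧ ∀ M ∈ S, (P * M).trace < 0 := by
  have : LocallyConvexSpace ℝ (Matrix ι ι ℝ) := inferInstanceAs (LocallyConvexSpace ℝ (ι → ι → ℝ))
  obtain ⟨f, u, hfu, hu⟩ := geometric_hahn_banach_closed_point hconv hcomp.isClosed h0
  obtain ⟨P, hP, hfP⟩ := exists_isSymm_forall_eq_trace_mul (f : Matrix ι ι ℝ →ₗ[ℝ] ℝ)
  refine ⟨P, hP, fun M hM => ?_⟩
  rw [← hfP M (hS M hM)]
  exact (hfu M hM).trans (hu.trans_eq (map_zero f))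

theorem isLyapunov_iff_forall_trace_mul_lyapunovMap_neg {P : Matrix ι ι ℝ} (hP : P.IsSymm)
    (A : Matrix ι ι ℝ) :
    IsLyapunov A P ↔
      ∀ X : Matrix ι ι ℝ, X.PosSemidef → X ≠ 0 → (P * lyapunovMap A X).trace < 0 := by
  have hQ : (-(P * A + Aᵀ * P)).IsHermitian := by
    simp [IsHermitian, conjTranspose_eq_transpose_of_trivial, hP.eq, add_comm]
  simp only [IsLyapunov, posDef_iff_forall_trace_mul_pos hQ, neg_mul, trace_neg, neg_pos,
    trace_mul_lyapunovMap]

theorem eq_zero_of_sumLyapunovMap_eq_zero {A : κ → Matrix ι ι ℝ} {P : Matrix ι ι ℝ} (hP : P.IsSymm)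
    (hneg : ∀ k, IsLyapunov (A k) P) {X : κ → Matrix ι ι ℝ}
    (hX : ∀ k, (X k).PosSemidef) (hAX : sumLyapunovMap A X = 0) : X = 0 := by
  by_contra hX0
  obtain ⟨k, hk⟩ := Function.ne_iff.1 hX0
  have htr (j : κ) (hj : X j ≠ 0) : (P * lyapunovMap (A j) (X j)).trace < 0 :=
    (isLyapunov_iff_forall_trace_mul_lyapunovMap_neg hP (A j)).1 (hneg j) (X j) (hX j) hj
  have hsum : ∑ j, (P * lyapunovMap (A j) (X j)).trace < 0 := by
    refine Finset.sum_neg' (fun j _ => ?_) ⟨k, Finset.mem_univ k, htr k hk⟩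
    obtain hj | hj := eq_or_ne (X j) 0
    · simp [hj]
    · exact (htr j hj).le
  rw [← trace_sum, ← Matrix.mul_sum, ← sumLyapunovMap_apply, hAX, mul_zero, trace_zero] at hsum
  exact hsum.false

theorem exists_isSymm_forall_isLyapunov {A : κ → Matrix ι ι ℝ}
    (hA : ∀ X : κ → Matrix ι ι ℝ, (∀ k, (X k).PosSemidef) → sumLyapunovMap A X = 0 → X = 0) :
    ∃ P : Matrix ι ι ℝ, P.IsSymm ∧ ∀ k, IsLyapunov (A k) P := by
  classical
  have h0 : 0 ∉ sumLyapunovMap A '' posSemidefBase κ ι := by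
    rintro ⟨X, ⟨hX, htr⟩, hAX⟩
    simp [hA X hX hAX] at htr
  have hsymm : ∀ M ∈ sumLyapunovMap A '' posSemidefBase κ ι, M.IsSymm := by
    rintro _ ⟨X, ⟨hX, -⟩, rfl⟩
    exact isSymm_sumLyapunovMap A fun k => isHermitian_iff_isSymm.1 (hX k).isHermitian
  obtain ⟨P, hP, hneg⟩ := exists_isSymm_forall_trace_mul_neg hsymm
    (convex_posSemidefBase.linear_image _)
    (isCompact_posSemidefBase.image (sumLyapunovMap A).continuous_of_finiteDimensional) h0
  refine ⟨P, hP, fun k => (isLyapunov_iff_forall_trace_mul_lyapunovMap_neg hP _).2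
    fun X hX hX0 => ?_⟩
  have htr : 0 < X.trace := hX.trace_nonneg.lt_of_ne' (hX.trace_eq_zero_iff.not.2 hX0)
  have hneg_smul := hneg _ ⟨_, single_mem_posSemidefBase k (hX.smul (inv_nonneg.2 htr.le))
    (by rw [trace_smul, smul_eq_mul, inv_mul_cancel₀ htr.ne']), sumLyapunovMap_single A k _⟩
  rw [map_smul, Matrix.mul_smul, trace_smul, smul_eq_mul] at hneg_smul
  exact neg_of_mul_neg_right hneg_smul (inv_nonneg.2 htr.le)

theorem exists_isSymm_isLyapunov_pair_iff (A B : Matrix ι ι ℝ) :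
    (∃ P : Matrix ι ι ℝ, P.IsSymm ∧ IsLyapunov A P ∧ IsLyapunov B P) ↔
      ∀ X Y : Matrix ι ι ℝ, X.PosSemidef → Y.PosSemidef →
        lyapunovMap A X + lyapunovMap B Y = 0 → X = 0 ∧ Y = 0 := by
  have hsum (X : Fin 2 → Matrix ι ι ℝ) :
      sumLyapunovMap ![A, B] X = lyapunovMap A (X 0) + lyapunovMap B (X 1) := by
    rw [sumLyapunovMap_apply, Fin.sum_univ_two, cons_val_zero, cons_val_one, cons_val_fin_one]
  constructor
  · rintro ⟨P, hP, hPA, hPB⟩ X Y hX hY hXY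
    have h0 : ![X, Y] = 0 := eq_zero_of_sumLyapunovMap_eq_zero (A := ![A, B]) hP
      (Fin.forall_fin_two.2 ⟨hPA, hPB⟩) (Fin.forall_fin_two.2 ⟨hX, hY⟩) ((hsum _).trans hXY)
    exact ⟨congrFun h0 0, congrFun h0 1⟩
  · intro h
    obtain ⟨P, hP, hneg⟩ := exists_isSymm_forall_isLyapunov (A := ![A, B]) fun X hX hAX =>
      funext (Fin.forall_fin_two.2 (h _ _ (hX 0) (hX 1) ((hsum X).symm.trans hAX)))
    exact ⟨P, hP, hneg 0, hneg 1⟩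

end Alternative

section Spectral

theorem exists_hasEigenvalue_sub_smul_mem {K V : Type*} [Field K] [IsAlgClosed K] [AddCommGroup V]
    [Module K V] [FiniteDimensional K V] (T : Module.End K V) {W : Submodule K V}
    (hTW : W ≤ W.comap T) (hW : W ≠ ⊤) :
    ∃ μ, T.HasEigenvalue μ ∧ ∃ y ∉ W, T y - μ • y ∈ W := by
  have : Nontrivial (V ⧸ W) := Submodule.Quotient.nontrivial_iff.2 hW
  obtain ⟨μ, hμ⟩ := Module.End.exists_eigenvalue (W.mapQ W T hTW)
  obtain ⟨q, hq⟩ := hμ.exists_hasEigenvector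
  obtain ⟨y, rfl⟩ := W.mkQ_surjective q
  have hyW : y ∉ W := fun hy => hq.2 ((Submodule.Quotient.mk_eq_zero W).2 hy)
  have hTy : T y - μ • y ∈ W := by
    rw [← Submodule.Quotient.mk_eq_zero, Submodule.Quotient.mk_sub, sub_eq_zero]
    exact hq.apply_eq_smul
  refine ⟨μ, fun hbot => hyW ?_, y, hyW, hTy⟩
  let S : Module.End K V := T - algebraMap K _ μ
  have hS : Function.Injective S := by
    rw [← LinearMap.ker_eq_bot, ← hbot]
    exact (Module.End.eigenspace_def).symm
  have hSW : W.map S = W :=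
    Submodule.eq_of_le_of_finrank_eq
      (Submodule.map_le_iff_le_comap.2 fun w hw => W.sub_mem (hTW hw) (W.smul_mem μ hw))
      (Submodule.equivMapOfInjective S hS W).finrank_eq.symm
  rw [← hSW] at hTy
  obtain ⟨w, hw, hSw⟩ := hTy
  exact hS hSw ▸ hw

theorem star_dotProduct_mul_add_mul_conjTranspose_mulVec {R : Type*} [CommSemiring R]
    [StarRing R] {A X : Matrix ι ι R} (hX : X.IsHermitian) (y : ι → R) :
    star y ⬝ᵥ (A * X + X * Aᴴ) *ᵥ y = star (star y ⬝ᵥ X *ᵥ Aᴴ *ᵥ y) + star y ⬝ᵥ X *ᵥ Aᴴ *ᵥ y := by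
  have hAX : star (star y ⬝ᵥ X *ᵥ Aᴴ *ᵥ y) = star y ⬝ᵥ (A * X) *ᵥ y := by
    rw [← star_dotProduct, mulVec_mulVec, star_mulVec, conjTranspose_mul, hX.eq,
      conjTranspose_conjTranspose, dotProduct_mulVec]
  rw [hAX, mulVec_mulVec, add_mulVec, dotProduct_add]

theorem mulVec_conjTranspose_mulVec_eq_zero {𝕜 : Type*} [RCLike 𝕜] {A X : Matrix ι ι 𝕜}
    (hX : X.IsHermitian) (hZ : (A * X + X * Aᴴ).PosSemidef) {y : ι → 𝕜} (hy : X *ᵥ y = 0) :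
    X *ᵥ Aᴴ *ᵥ y = 0 := by
  have hXAy : star y ⬝ᵥ X *ᵥ Aᴴ *ᵥ y = 0 := by
    rw [dotProduct_mulVec, ← hX.eq, ← star_mulVec, hy, star_zero, zero_dotProduct]
  have hZy : (A * X + X * Aᴴ) *ᵥ y = 0 := by
    rw [← hZ.dotProduct_mulVec_zero_iff, star_dotProduct_mul_add_mul_conjTranspose_mulVec hX,
      hXAy, star_zero, add_zero]
  rwa [add_mulVec, ← mulVec_mulVec, ← mulVec_mulVec, hy, mulVec_zero, zero_add] at hZy

theorem exists_mem_spectrum_re_nonneg [DecidableEq ι] {A X : Matrix ι ι ℂ} (hX : X.PosSemidef)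
    (hX0 : X ≠ 0) (hZ : (A * X + X * Aᴴ).PosSemidef) :
    ∃ μ ∈ spectrum ℂ A, 0 ≤ μ.re ∧ (A * X + X * Aᴴ = 0 → μ.re = 0) := by
  have hker : LinearMap.ker X.toLin' ≠ ⊤ := by
    simpa [LinearMap.ker_eq_top] using hX0
  obtain ⟨μ, hμ, y, hy, hAy⟩ := exists_hasEigenvalue_sub_smul_mem (toLin' Aᴴ)
    (W := LinearMap.ker X.toLin')
    (fun y hy => mulVec_conjTranspose_mulVec_eq_zero hX.isHermitian hZ hy) hker
  have hXAy : X *ᵥ Aᴴ *ᵥ y = μ • X *ᵥ y := by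
    rwa [LinearMap.mem_ker, toLin'_apply, toLin'_apply, mulVec_sub, mulVec_smul, sub_eq_zero] at hAy
  have hXy : 0 < star y ⬝ᵥ X *ᵥ y :=
    (hX.dotProduct_mulVec_nonneg y).lt_of_ne' ((hX.dotProduct_mulVec_zero_iff y).not.2 hy)
  have hμA : star μ ∈ spectrum ℂ A := by
    rw [← Set.mem_star, ← spectrum.map_star, star_eq_conjTranspose, ← spectrum_toLin']
    exact hμ.mem_spectrum
  obtain ⟨r, hr, hXyr⟩ := RCLike.pos_iff_exists_ofReal.1 hXy
  have hZy : star y ⬝ᵥ (A * X + X * Aᴴ) *ᵥ y = (2 * μ.re * r : ℝ) := by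
    rw [star_dotProduct_mul_add_mul_conjTranspose_mulVec hX.isHermitian, hXAy, dotProduct_smul,
      smul_eq_mul, ← hXyr, add_comm, Complex.star_def, Complex.add_conj]
    simp [mul_assoc]
  refine ⟨star μ, hμA, ?_, fun h0 => ?_⟩
  · have h2 : 0 ≤ 2 * μ.re * r := by
      simpa only [hZy, Complex.zero_le_real] using hZ.dotProduct_mulVec_nonneg y
    exact nonneg_of_mul_nonneg_right (nonneg_of_mul_nonneg_left h2 hr) two_pos
  · have h2 : 2 * μ.re * r = 0 := by
      rw [h0, zero_mulVec, dotProduct_zero] at hZy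
      exact_mod_cast hZy.symm
    simpa [hr.ne'] using h2

theorem map_algebraMap_lyapunovMap (A X : Matrix ι ι ℝ) :
    (lyapunovMap A X).map (algebraMap ℝ ℂ) =
      A.map (algebraMap ℝ ℂ) * X.map (algebraMap ℝ ℂ) +
        X.map (algebraMap ℝ ℂ) * (A.map (algebraMap ℝ ℂ))ᴴ := by
  have hAt : (A.map (algebraMap ℝ ℂ))ᴴ = Aᵀ.map (algebraMap ℝ ℂ) := by
    ext i j
    simp
  rw [lyapunovMap_apply, Matrix.map_add _ (map_add _), Matrix.map_mul, Matrix.map_mul, hAt]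

theorem posSemidef_map_algebraMap {m : Type*} [Finite m] {X : Matrix m m ℝ}
    (hX : X.PosSemidef) : (X.map (algebraMap ℝ ℂ)).PosSemidef := by
  have := Fintype.ofFinite m
  obtain ⟨M, rfl⟩ := exists_eq_conjTranspose_mul_self hX
  have hM : Mᴴ.map (algebraMap ℝ ℂ) = (M.map (algebraMap ℝ ℂ))ᴴ :=
    conjTranspose_map _ fun _ => (Complex.conj_ofReal _).symm
  rw [Matrix.map_mul, hM]
  exact posSemidef_conjTranspose_mul_self _

theorem exists_mem_spectrum_map_re_nonneg [DecidableEq ι] {A X : Matrix ι ι ℝ} (hX : X.PosSemidef)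
    (hX0 : X ≠ 0) (hZ : (lyapunovMap A X).PosSemidef) :
    ∃ μ ∈ spectrum ℂ (A.map (algebraMap ℝ ℂ)), 0 ≤ μ.re ∧ (lyapunovMap A X = 0 → μ.re = 0) := by
  have map_eq_zero (M : Matrix ι ι ℝ) : M.map (algebraMap ℝ ℂ) = 0 ↔ M = 0 :=
    map_eq_zero_iff (algebraMap ℝ ℂ).mapMatrix (Matrix.map_injective Complex.ofReal_injective)
  have hZ' := posSemidef_map_algebraMap hZ
  rw [map_algebraMap_lyapunovMap] at hZ'
  obtain ⟨μ, hμ, hμ_nonneg, hμ_zero⟩ :=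
    exists_mem_spectrum_re_nonneg (posSemidef_map_algebraMap hX) ((map_eq_zero X).not.2 hX0) hZ'
  rw [← map_algebraMap_lyapunovMap, map_eq_zero] at hμ_zero
  exact ⟨μ, hμ, hμ_nonneg, hμ_zero⟩

theorem eq_zero_of_posSemidef_lyapunovMap [DecidableEq ι] {A X : Matrix ι ι ℝ}
    (hA : ∀ μ ∈ spectrum ℂ (A.map (algebraMap ℝ ℂ)), μ.re < 0) (hX : X.PosSemidef)
    (hAX : (lyapunovMap A X).PosSemidef) : X = 0 := by
  by_contra hX0
  obtain ⟨μ, hμ, hμ_nonneg, -⟩ := exists_mem_spectrum_map_re_nonneg hX hX0 hAX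
  exact (hA μ hμ).not_ge hμ_nonneg

theorem eq_zero_of_lyapunovMap_eq_zero [DecidableEq ι] {A X : Matrix ι ι ℝ}
    (hA : ∀ μ ∈ spectrum ℂ (A.map (algebraMap ℝ ℂ)), μ.re ≠ 0) (hX : X.PosSemidef)
    (hAX : lyapunovMap A X = 0) : X = 0 := by
  by_contra hX0
  obtain ⟨μ, hμ, -, hμ_zero⟩ := exists_mem_spectrum_map_re_nonneg hX hX0 (hAX ▸ PosSemidef.zero)
  exact hA μ hμ (hμ_zero hAX)

end Spectral

section Comparison

theorem exists_posSemidef_sub_smul [Nonempty ι] {P P₀ : Matrix ι ι ℝ} (hP : P.IsHermitian)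
    (hP₀ : P₀.PosDef) :
    ∃ c : ℝ, (P - c • P₀).PosSemidef ∧ ∃ x : ι → ℝ, x ≠ 0 ∧ P *ᵥ x = c • P₀ *ᵥ x := by
  let rayleigh (x : ι → ℝ) : ℝ := (x ⬝ᵥ P *ᵥ x) / (x ⬝ᵥ P₀ *ᵥ x)
  have hpos (x : ι → ℝ) (hx : x ≠ 0) : 0 < x ⬝ᵥ P₀ *ᵥ x := hP₀.dotProduct_mulVec_pos hx
  have hsphere (x : ι → ℝ) (hx : x ∈ Metric.sphere (0 : ι → ℝ) 1) : x ≠ 0 :=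
    ne_zero_of_mem_unit_sphere ⟨x, hx⟩
  have hcont : ContinuousOn rayleigh (Metric.sphere 0 1) :=
    ContinuousOn.div (by fun_prop) (by fun_prop) fun x hx => (hpos x (hsphere x hx)).ne'
  obtain ⟨x, hx, hmin⟩ := (isCompact_sphere (0 : ι → ℝ) 1).exists_isMinOn
    (NormedSpace.sphere_nonempty.2 zero_le_one) hcont
  have hquad (y : ι → ℝ) : y ⬝ᵥ (P - rayleigh x • P₀) *ᵥ y =
      y ⬝ᵥ P *ᵥ y - rayleigh x * (y ⬝ᵥ P₀ *ᵥ y) := by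
    rw [sub_mulVec, smul_mulVec, dotProduct_sub, dotProduct_smul, smul_eq_mul]
  have hsub : (P - rayleigh x • P₀).PosSemidef := by
    refine .of_dotProduct_mulVec_nonneg (hP.sub (hP₀.isHermitian.smul (.all _))) fun y => ?_
    rw [star_trivial, hquad, sub_nonneg]
    obtain rfl | hy := eq_or_ne y 0
    · simp
    have hscale : rayleigh (‖y‖⁻¹ • y) = rayleigh y := by
      simp only [rayleigh, mulVec_smul, dotProduct_smul, smul_dotProduct, smul_eq_mul]
      have hnorm : ‖y‖ ≠ 0 := norm_ne_zero_iff.2 hy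
      field_simp
    have hle : rayleigh x ≤ rayleigh y := hscale ▸ hmin (by simp [norm_smul, hy])
    exact (le_div_iff₀ (hpos y hy)).1 hle
  have hker : (P - rayleigh x • P₀) *ᵥ x = 0 := by
    rw [← hsub.dotProduct_mulVec_zero_iff, star_trivial, hquad,
      div_mul_cancel₀ _ (hpos x (hsphere x hx)).ne', sub_self]
  refine ⟨rayleigh x, hsub, x, hsphere x hx, ?_⟩
  rwa [sub_mulVec, smul_mulVec, sub_eq_zero] at hker

theorem dotProduct_mul_add_transpose_mul_mulVec {R : Type*} [CommSemiring R] {P : Matrix ι ι R}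
    (hP : P.IsSymm) (A : Matrix ι ι R) (x : ι → R) :
    x ⬝ᵥ (P * A + Aᵀ * P) *ᵥ x = 2 * (A *ᵥ x ⬝ᵥ P *ᵥ x) := by
  have hPA : x ⬝ᵥ (P * A) *ᵥ x = A *ᵥ x ⬝ᵥ P *ᵥ x := by
    rw [← mulVec_mulVec, dotProduct_mulVec, ← mulVec_transpose, hP.eq, dotProduct_comm]
  have hAP : x ⬝ᵥ (Aᵀ * P) *ᵥ x = A *ᵥ x ⬝ᵥ P *ᵥ x := by
    rw [← mulVec_mulVec, dotProduct_mulVec, vecMul_transpose]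
  rw [add_mulVec, dotProduct_add, hPA, hAP, two_mul]

theorem posDef_of_isLyapunov_of_posDef {A P P₀ : Matrix ι ι ℝ} (hP₀ : P₀.PosDef)
    (hP₀A : IsLyapunov A P₀) (hP : P.IsSymm) (hPA : IsLyapunov A P) : P.PosDef := by
  cases isEmpty_or_nonempty ι
  · exact Subsingleton.elim P₀ P ▸ hP₀
  obtain ⟨c, hsub, x, hx, hPx⟩ := exists_posSemidef_sub_smul (isHermitian_iff_isSymm.2 hP) hP₀
  have hneg {Q : Matrix ι ι ℝ} (hQ : Q.IsSymm) (hQA : IsLyapunov A Q) :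
      A *ᵥ x ⬝ᵥ Q *ᵥ x < 0 := by
    have hQx := PosDef.dotProduct_mulVec_pos hQA hx
    rw [star_trivial, neg_mulVec, dotProduct_neg, dotProduct_mul_add_transpose_mul_mulVec hQ,
      neg_pos] at hQx
    exact neg_of_mul_neg_right hQx zero_le_two
  have hc : 0 < c := by
    have hPneg := hneg hP hPA
    rw [hPx, dotProduct_smul, smul_eq_mul] at hPneg
    exact pos_of_mul_neg_left hPneg (hneg (isHermitian_iff_isSymm.1 hP₀.isHermitian) hP₀A).le
  rw [← sub_add_cancel P (c • P₀)]
  exact (hP₀.smul hc).posSemidef_add hsub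

end Comparison

section Lyapunov

variable [DecidableEq ι]

theorem exists_posDef_isLyapunov {A : Matrix ι ι ℝ}
    (hA : ∀ μ ∈ spectrum ℂ (A.map (algebraMap ℝ ℂ)), μ.re < 0) :
    ∃ P : Matrix ι ι ℝ, P.PosDef ∧ IsLyapunov A P := by
  -- For the matrix `-1` the Lyapunov inequality reads `2 P > 0`.
  obtain ⟨P, -, hPneg, hPA⟩ := (exists_isSymm_isLyapunov_pair_iff (-1) A).2 fun X Y hX hY hXY => by
    have hAY : lyapunovMap A Y = X + X := by
      simpa [lyapunovMap_apply] using eq_neg_of_add_eq_zero_right hXY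
    have hY0 : Y = 0 := eq_zero_of_posSemidef_lyapunovMap hA hY (hAY ▸ hX.add hX)
    rw [hY0, map_zero, eq_comm, ← two_smul ℝ] at hAY
    exact ⟨(smul_eq_zero.1 hAY).resolve_left two_ne_zero, hY0⟩
  have hP : ((2 : ℝ) • P).PosDef := by
    simpa [IsLyapunov, two_smul] using hPneg
  refine ⟨P, ?_, hPA⟩
  simpa using hP.smul (inv_pos.2 (two_pos (α := ℝ)))

theorem posDef_of_isLyapunov {A P : Matrix ι ι ℝ}
    (hA : ∀ μ ∈ spectrum ℂ (A.map (algebraMap ℝ ℂ)), μ.re < 0) (hP : P.IsSymm)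
    (hPA : IsLyapunov A P) : P.PosDef := by
  obtain ⟨P₀, hP₀, hP₀A⟩ := exists_posDef_isLyapunov hA
  exact posDef_of_isLyapunov_of_posDef hP₀ hP₀A hP hPA

theorem exists_posDef_isLyapunov_pair_iff {A B : Matrix ι ι ℝ}
    (hA : ∀ μ ∈ spectrum ℂ (A.map (algebraMap ℝ ℂ)), μ.re < 0) :
    (∃ P : Matrix ι ι ℝ, P.PosDef ∧ IsLyapunov A P ∧ IsLyapunov B P) ↔
      ∃ P : Matrix ι ι ℝ, P.IsSymm ∧ IsLyapunov A P ∧ IsLyapunov B P :=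
  ⟨fun ⟨P, hP, hPAB⟩ => ⟨P, isHermitian_iff_isSymm.1 hP.isHermitian, hPAB⟩,
    fun ⟨P, hP, hPA, hPB⟩ => ⟨P, posDef_of_isLyapunov hA hP hPA, hPA, hPB⟩⟩

theorem no_CQLF_iff_cones_intersect_general (A B : Matrix ι ι ℝ)
    (hA : ∀ μ ∈ spectrum ℂ (A.map (algebraMap ℝ ℂ)), μ.re < 0)
    (hB : ∀ μ ∈ spectrum ℂ (B.map (algebraMap ℝ ℂ)), μ.re ≠ 0) :
    (¬ ∃ P : Matrix ι ι ℝ, P.PosDef ∧ IsLyapunov A P ∧ IsLyapunov B P) ↔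
      ∃ X Y : Matrix ι ι ℝ, X ≠ 0 ∧ Y ≠ 0 ∧ X.PosSemidef ∧ Y.PosSemidef ∧
        A * X + X * Aᵀ + B * Y + Y * Bᵀ = 0 := by
  rw [exists_posDef_isLyapunov_pair_iff hA, exists_isSymm_isLyapunov_pair_iff]
  constructor
  · intro h
    push Not at h
    obtain ⟨X, Y, hX, hY, hXY, hne⟩ := h
    have hY0 (hX0 : X = 0) : Y = 0 :=
      eq_zero_of_lyapunovMap_eq_zero hB hY (by simpa [hX0] using hXY)
    have hX0 (hY0 : Y = 0) : X = 0 :=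
      eq_zero_of_lyapunovMap_eq_zero (fun μ hμ => (hA μ hμ).ne) hX (by simpa [hY0] using hXY)
    exact ⟨X, Y, fun h0 => hne h0 (hY0 h0), fun h0 => hne (hX0 h0) h0, hX, hY,
      by simpa [lyapunovMap_apply, add_assoc] using hXY⟩
  · rintro ⟨X, Y, hX0, -, hX, hY, hXY⟩ h
    exact hX0 (h X Y hX hY (by simpa [lyapunovMap_apply, add_assoc] using hXY)).1

end Lyapunov

/-- For stable `A`, `B`, the pair has no CQLF iff there are nonzero positive semidefinite
`X`, `Y` with `A·X + X·Aᵀ + B·Y + Y·Bᵀ = 0`. -/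
theorem no_CQLF_iff_cones_intersect {n : ℕ} (A B : Matrix (Fin n) (Fin n) ℝ)
    (hA : IsStable A) (hB : IsStable B) :
    ¬ HasCQLF A B ↔
      ∃ X Y : Matrix (Fin n) (Fin n) ℝ, X ≠ 0 ∧ Y ≠ 0 ∧ X.PosSemidef ∧ Y.PosSemidef ∧
        A * X + X * Aᵀ + B * Y + Y * Bᵀ = 0 :=
  no_CQLF_iff_cones_intersect_general A B hA fun μ hμ => (hB μ hμ).ne
end

section
/- Let A and B be real n×n stable matrices with A − B of rank one. Suppose there exist nonzero real positive semidefinite symmetric matrices X and Y such that A·X + X·Aᵀ + B·Y + Y·Bᵀ = 0. Then there exist nonzero vectors v, w ∈ ℝⁿ such that A·v·vᵀ + v·vᵀ·Aᵀ + B·w·wᵀ + w·wᵀ·Bᵀ = 0. -/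
open Matrix

/-!
If `A * B` has an eigenvalue `-r² < 0`, with eigenvector `w`, then `v = r⁻¹ B w` satisfies
`B w = r v` and `A v = -r w`, and the pair `v, w` solves the equation. Otherwise
`det (A B + t) > 0` for all `t ≥ 0`; writing `B = A - b cᵀ`, the identity
`det (A B + ω²) = det (A² + ω²) (1 - Re cᵀ (A - iω)⁻¹ b)` shows that `Re cᵀ (A - iω)⁻¹ b < 1` on
the whole imaginary axis, and this forces `X + Y = 0`. Indeed, factor `X + Y = S Sᵀ` with `S` of
full column rank, and let `S g = Y c`. The equation says that `A S - b gᵀ = S K` with `K` skew, and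
`Y ≤ X + Y` gives `|g|² ≤ cᵀ S g`. For a unitary eigenbasis `K uₖ = iωₖ uₖ` and `γₖ = gᵀ uₖ` one has
`S uₖ = γₖ (A - iωₖ)⁻¹ b`, so by Parseval `∑ |γₖ|² ≤ ∑ |γₖ|² Re cᵀ (A - iωₖ)⁻¹ b`. Hence all `γₖ`
vanish, and then `S = 0`.
-/

/-- `A` has no eigenvalue on the imaginary axis, `0` included; equivalently, its resolvent is
defined on all of that axis. -/
def HasNoImaginaryEigenvalue {ι : Type*} [Fintype ι] [DecidableEq ι] (A : Matrix ι ι ℝ) : Prop :=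
  ∀ ω : ℝ, Complex.I * ω ∉ spectrum ℂ (A.map (algebraMap ℝ ℂ))

lemma IsStable.hasNoImaginaryEigenvalue {n : ℕ} {A : Matrix (Fin n) (Fin n) ℝ}
    (hA : IsStable A) : HasNoImaginaryEigenvalue A :=
  fun ω hω => by simpa using hA _ hω

section LinearAlgebra

lemma exists_vecMulVec_of_rank_le_one {ι κ 𝕜 : Type*} [Fintype ι] [Field 𝕜] {M : Matrix κ ι 𝕜}
    (hM : M.rank ≤ 1) : ∃ b c, M = vecMulVec b c := by
  classical
  obtain ⟨b, hb⟩ := finrank_le_one_iff.mp hM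
  choose c hc using fun j => hb ⟨M *ᵥ Pi.single j 1, ⟨_, rfl⟩⟩
  refine ⟨b, c, ?_⟩
  ext i j
  have hij := congrFun (congrArg Subtype.val (hc j)) i
  simp only [SetLike.val_smul, Pi.smul_apply, smul_eq_mul, mulVec_single_one, col_apply] at hij
  rw [vecMulVec_apply, mul_comm, hij]

variable {ι R : Type*} [Fintype ι] [DecidableEq ι] [CommRing R]

lemma det_sub_vecMulVec_mulVec (M : Matrix ι ι R) (p c : ι → R) :
    (M - vecMulVec (M *ᵥ p) c).det = M.det * (1 - c ⬝ᵥ p) := by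
  have hfactor : M - vecMulVec (M *ᵥ p) c = M * (1 - vecMulVec p c) := by
    rw [mul_sub, mul_one, mul_vecMulVec]
  have hdet : (1 - vecMulVec p c).det = 1 - c ⬝ᵥ p := by
    rw [vecMulVec_eq Unit, det_one_sub_mul_comm]
    simp
  rw [hfactor, det_mul, hdet]

open Polynomial in
lemma eval_pos_of_monic_of_forall_ge_ne_zero {P : ℝ[X]} (hP : P.Monic) {s : ℝ}
    (hroot : ∀ t, s ≤ t → P.eval t ≠ 0) : 0 < P.eval s := by
  by_contra! hs
  obtain ⟨T, hsT, hT⟩ : ∃ T, s ≤ T ∧ 0 ≤ P.eval T := by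
    rcases P.natDegree.eq_zero_or_pos with hdeg | hdeg
    · exact ⟨s, le_rfl, by simp [hP.natDegree_eq_zero.mp hdeg]⟩
    · have htop := P.tendsto_atTop_of_leadingCoeff_nonneg
        (natDegree_pos_iff_degree_pos.mp hdeg) (by simp [hP.leadingCoeff])
      exact ((Filter.eventually_ge_atTop s).and (htop.eventually_ge_atTop 0)).exists
  obtain ⟨t, ht, ht0⟩ := intermediate_value_Icc hsT P.continuous.continuousOn ⟨hs, hT⟩
  exact hroot t ht.1 ht0

lemma det_add_smul_one_pos {M : Matrix ι ι ℝ} {s : ℝ}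
    (h : ∀ t, s ≤ t → (M + t • (1 : Matrix ι ι ℝ)).det ≠ 0) :
    0 < (M + s • (1 : Matrix ι ι ℝ)).det := by
  have heval (t : ℝ) : (-M).charpoly.eval t = (M + t • (1 : Matrix ι ι ℝ)).det := by
    rw [eval_charpoly, sub_neg_eq_add, add_comm, scalar_apply, smul_one_eq_diagonal]
  simp only [← heval] at h ⊢
  exact eval_pos_of_monic_of_forall_ge_ne_zero (-M).charpoly_monic h

end LinearAlgebra

section FrequencyResponse

lemma re_map_mulVec {ι κ : Type*} [Fintype ι] (M : Matrix κ ι ℝ) (f : ι → ℂ) :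
    Complex.re ∘ (M.map (algebraMap ℝ ℂ) *ᵥ f) = M *ᵥ (Complex.re ∘ f) := by
  ext i
  simp [mulVec, dotProduct]

variable {ι : Type*} [Fintype ι] [DecidableEq ι]

/-- The complex matrix `A - iω`, whose inverse is the resolvent of `A` on the imaginary axis. -/
noncomputable def imagPencil (A : Matrix ι ι ℝ) (ω : ℝ) : Matrix ι ι ℂ :=
  A.map (algebraMap ℝ ℂ) - (Complex.I * ω) • 1

/-- The frequency response `cᵀ (A - iω)⁻¹ b`, meaningful when `iω` is not an eigenvalue of `A`. -/
noncomputable def freqResponse (A : Matrix ι ι ℝ) (b c : ι → ℝ) (ω : ℝ) : ℂ :=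
  (algebraMap ℝ ℂ ∘ c) ⬝ᵥ ((imagPencil A ω)⁻¹ *ᵥ (algebraMap ℝ ℂ ∘ b))

lemma HasNoImaginaryEigenvalue.isUnit_det_imagPencil {A : Matrix ι ι ℝ}
    (hA : HasNoImaginaryEigenvalue A) (ω : ℝ) : IsUnit (imagPencil A ω).det := by
  have h := spectrum.notMem_iff.mp (hA ω)
  rw [Algebra.algebraMap_eq_smul_one, IsUnit.sub_iff] at h
  exact (isUnit_iff_isUnit_det _).mp h

lemma HasNoImaginaryEigenvalue.det_ne_zero {A : Matrix ι ι ℝ}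
    (hA : HasNoImaginaryEigenvalue A) : A.det ≠ 0 := by
  have h : imagPencil A 0 = A.map (algebraMap ℝ ℂ) := by simp [imagPencil]
  have hdet := (hA.isUnit_det_imagPencil 0).ne_zero
  rw [h, ← RingHom.mapMatrix_apply, ← RingHom.map_det] at hdet
  exact (map_ne_zero _).mp hdet

lemma imagPencil_neg_mul_imagPencil (A : Matrix ι ι ℝ) (ω : ℝ) :
    imagPencil A (-ω) * imagPencil A ω =
      (A * A + ω ^ 2 • (1 : Matrix ι ι ℝ)).map (algebraMap ℝ ℂ) := by
  have hmap : (A * A + ω ^ 2 • (1 : Matrix ι ι ℝ)).map (algebraMap ℝ ℂ) =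
      A.map (algebraMap ℝ ℂ) * A.map (algebraMap ℝ ℂ) + (ω : ℂ) ^ 2 • 1 := by
    rw [← Matrix.map_mul]
    ext i j
    simp [one_apply, apply_ite Complex.ofReal]
  rw [hmap, imagPencil, imagPencil, sub_mul, mul_sub, mul_sub]
  simp only [smul_mul_assoc, mul_smul_comm, one_mul, mul_one, smul_smul, Complex.ofReal_neg]
  rw [show Complex.I * ω * (Complex.I * -ω) = (ω : ℂ) ^ 2 by
    linear_combination -(ω : ℂ) ^ 2 * Complex.I_sq]
  module

lemma det_imagPencil_neg (A : Matrix ι ι ℝ) (ω : ℝ) :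
    (imagPencil A (-ω)).det = star (imagPencil A ω).det := by
  have hconj : imagPencil A (-ω) = (starRingEnd ℂ).mapMatrix (imagPencil A ω) := by
    ext i j
    obtain rfl | hij := eq_or_ne i j
    · simp [imagPencil]
    · simp [imagPencil, hij]
  rw [hconj, ← RingHom.map_det, starRingEnd_apply]

lemma HasNoImaginaryEigenvalue.det_mul_self_add_sq_pos {A : Matrix ι ι ℝ}
    (hA : HasNoImaginaryEigenvalue A) (ω : ℝ) :
    0 < (A * A + ω ^ 2 • (1 : Matrix ι ι ℝ)).det := by
  have hdet : (A * A + ω ^ 2 • (1 : Matrix ι ι ℝ)).det = Complex.normSq (imagPencil A ω).det := by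
    have h := congrArg det (imagPencil_neg_mul_imagPencil A ω)
    rw [det_mul, det_imagPencil_neg, ← RingHom.mapMatrix_apply, ← RingHom.map_det,
      mul_comm] at h
    exact Complex.ofReal_injective (h.symm.trans (Complex.mul_conj _))
  rw [hdet]
  exact Complex.normSq_pos.mpr (hA.isUnit_det_imagPencil ω).ne_zero

lemma HasNoImaginaryEigenvalue.mulVec_re_resolvent {A : Matrix ι ι ℝ}
    (hA : HasNoImaginaryEigenvalue A) (b : ι → ℝ) (ω : ℝ) :
    (A * A + ω ^ 2 • (1 : Matrix ι ι ℝ)) *ᵥ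
      (Complex.re ∘ ((imagPencil A ω)⁻¹ *ᵥ (algebraMap ℝ ℂ ∘ b))) = A *ᵥ b := by
  rw [← re_map_mulVec, ← imagPencil_neg_mul_imagPencil, mulVec_mulVec, Matrix.mul_assoc,
    mul_nonsing_inv _ (hA.isUnit_det_imagPencil ω), mul_one, imagPencil, sub_mulVec, smul_mulVec,
    one_mulVec]
  have hre : Complex.re ∘ (A.map (algebraMap ℝ ℂ) *ᵥ (algebraMap ℝ ℂ ∘ b)) = A *ᵥ b :=
    re_map_mulVec A _
  ext i
  simpa using congrFun hre i

lemma HasNoImaginaryEigenvalue.det_mul_sub_vecMulVec_add_sq {A : Matrix ι ι ℝ}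
    (hA : HasNoImaginaryEigenvalue A) (b c : ι → ℝ) (ω : ℝ) :
    (A * (A - vecMulVec b c) + ω ^ 2 • (1 : Matrix ι ι ℝ)).det =
      (A * A + ω ^ 2 • (1 : Matrix ι ι ℝ)).det * (1 - (freqResponse A b c ω).re) := by
  set h := (imagPencil A ω)⁻¹ *ᵥ (algebraMap ℝ ℂ ∘ b) with hh
  have hre : (freqResponse A b c ω).re = c ⬝ᵥ (Complex.re ∘ h) := by
    simp [freqResponse, dotProduct, hh]
  rw [hre, ← det_sub_vecMulVec_mulVec, hA.mulVec_re_resolvent, mul_sub, mul_vecMulVec,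
    sub_add_eq_add_sub]

lemma HasNoImaginaryEigenvalue.re_freqResponse_lt_one {A : Matrix ι ι ℝ}
    (hA : HasNoImaginaryEigenvalue A) {b c : ι → ℝ} {ω : ℝ}
    (hdet : 0 < (A * (A - vecMulVec b c) + ω ^ 2 • (1 : Matrix ι ι ℝ)).det) :
    (freqResponse A b c ω).re < 1 := by
  rw [hA.det_mul_sub_vecMulVec_add_sq] at hdet
  exact sub_pos.mp (pos_of_mul_pos_right hdet (hA.det_mul_self_add_sq_pos ω).le)

end FrequencyResponse

section Spectral

open scoped ComplexOrder

variable {κ 𝕜 : Type*} [Fintype κ] [RCLike 𝕜]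

lemma mulVec_eq_zero_of_add_mulVec_eq_zero {X Y : Matrix κ κ 𝕜} (hX : X.PosSemidef)
    (hY : Y.PosSemidef) {x : κ → 𝕜} (hx : (X + Y) *ᵥ x = 0) : Y *ᵥ x = 0 := by
  have hsum : star x ⬝ᵥ X *ᵥ x + star x ⬝ᵥ Y *ᵥ x = 0 := by
    rw [← dotProduct_add, ← add_mulVec, hx, dotProduct_zero]
  exact (hY.dotProduct_mulVec_zero_iff x).mp <| ((add_eq_zero_iff_of_nonneg
    (hX.dotProduct_mulVec_nonneg x) (hY.dotProduct_mulVec_nonneg x)).mp hsum).2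

variable [DecidableEq κ]

lemma exists_unitary_of_conjTranspose_eq_neg {K : Matrix κ κ ℂ} (hK : Kᴴ = -K) :
    ∃ (U : Matrix κ κ ℂ) (ω : κ → ℝ), U * Uᴴ = 1 ∧
      ∀ k, K *ᵥ U.col k = (Complex.I * ω k) • U.col k := by
  have hH : (-Complex.I • K).IsHermitian := by
    simp [IsHermitian, conjTranspose_smul, hK]
  refine ⟨hH.eigenvectorUnitary, hH.eigenvalues,
    Unitary.coe_mul_star_self hH.eigenvectorUnitary, fun k => ?_⟩
  have heig := congrArg (Complex.I • ·) (hH.mulVec_eigenvectorBasis k)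
  simp only [smul_mulVec, smul_smul, mul_neg, Complex.I_mul_I, neg_neg, one_smul] at heig
  rw [hH.eigenvectorUnitary_col_eq, heig]
  ext i
  simp [mul_assoc]

lemma sum_dotProduct_col_mul_star {R : Type*} [CommSemiring R] [StarRing R] {U : Matrix κ κ R}
    (hU : U * Uᴴ = 1) (a g : κ → R) :
    ∑ k, (a ⬝ᵥ U.col k) * star (g ⬝ᵥ U.col k) = a ⬝ᵥ star g := by
  calc ∑ k, (a ⬝ᵥ U.col k) * star (g ⬝ᵥ U.col k) = (a ᵥ* U) ⬝ᵥ star (g ᵥ* U) := rfl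
    _ = a ⬝ᵥ star g := by rw [star_vecMul, ← dotProduct_mulVec, mulVec_mulVec, hU, one_mulVec]

lemma exists_mul_conjTranspose_eq_of_posSemidef {Z : Matrix κ κ 𝕜} (hZ : Z.PosSemidef) :
    ∃ (s : Finset κ) (S : Matrix κ s 𝕜) (T : Matrix s κ 𝕜), S * Sᴴ = Z ∧ T * S = 1 := by
  set U : Matrix κ κ 𝕜 := hZ.isHermitian.eigenvectorUnitary.1
  set d : κ → ℝ := fun k => √(hZ.isHermitian.eigenvalues k)
  have hUU : Uᴴ * U = 1 := Unitary.coe_star_mul_self hZ.isHermitian.eigenvectorUnitary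
  have hspec : Z = U * diagonal (fun k => (d k * d k : 𝕜)) * Uᴴ := by
    conv_lhs => rw [hZ.isHermitian.spectral_theorem, Unitary.conjStarAlgAut_apply]
    congr! with k
    rw [← RCLike.ofReal_mul, Real.mul_self_sqrt (hZ.eigenvalues_nonneg k)]
    rfl
  refine ⟨Finset.univ.filter (d · ≠ 0), of fun i k => U i k * d k,
    of fun k j => (d k : 𝕜)⁻¹ * star (U j k), ?_, ?_⟩
  · ext i j
    let summand (k : κ) : 𝕜 := U i k * d k * star (U j k * d k)
    calc ∑ k : Finset.univ.filter (d · ≠ 0), summand k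
        = ∑ k with d k ≠ 0, summand k := Finset.sum_coe_sort _ summand
      _ = ∑ k, summand k := Finset.sum_filter_of_ne fun k _ hk h0 => hk (by simp [summand, h0])
      _ = (U * diagonal (fun k => (d k * d k : 𝕜)) * Uᴴ) i j := by
          rw [mul_apply]
          simp only [mul_diagonal, conjTranspose_apply]
          refine Finset.sum_congr rfl fun k _ => ?_
          simp only [summand, star_mul', RCLike.star_def, RCLike.conj_ofReal]
          ring
      _ = Z i j := by rw [← hspec]
  · ext k l
    have hl : (d l : 𝕜) ≠ 0 := RCLike.ofReal_ne_zero.mpr (Finset.mem_filter.mp l.2).2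
    calc ∑ i, (d k : 𝕜)⁻¹ * star (U i k) * (U i l * d l) = (d k : 𝕜)⁻¹ * (Uᴴ * U) k l * d l := by
          simp only [mul_apply, conjTranspose_apply, Finset.mul_sum, Finset.sum_mul]
          exact Finset.sum_congr rfl fun i _ => by ring
      _ = (1 : Matrix _ _ 𝕜) k l := by
          rw [hUU]
          obtain rfl | hkl := eq_or_ne k l
          · simp [hl]
          · simp [one_apply_ne hkl, one_apply_ne (Subtype.coe_injective.ne hkl)]

end Spectral

section LyapunovFactor

variable {ι κ : Type*} [Fintype ι] [Fintype κ] [DecidableEq κ]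

lemma exists_transpose_eq_neg_and_eq_mul {R : Type*} [CommRing R] {S N : Matrix ι κ R}
    {T : Matrix κ ι R} (hTS : T * S = 1) (hskew : (N * Sᵀ)ᵀ = -(N * Sᵀ)) :
    ∃ K : Matrix κ κ R, Kᵀ = -K ∧ N = S * K := by
  have hST : Sᵀ * Tᵀ = 1 := by rw [← transpose_mul, hTS, transpose_one]
  have hSN : S * Nᵀ = -(N * Sᵀ) := by rw [← hskew, transpose_mul, transpose_transpose]
  have hN : S * (Nᵀ * Tᵀ) = -N := by
    rw [← Matrix.mul_assoc, hSN, Matrix.neg_mul, Matrix.mul_assoc, hST, Matrix.mul_one]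
  have hTN : Nᵀ * Tᵀ = -(T * N) := by
    rw [← Matrix.mul_neg, ← hN, ← Matrix.mul_assoc, hTS, Matrix.one_mul]
  refine ⟨T * N, by rw [transpose_mul, hTN], ?_⟩
  rw [← neg_inj, ← hN, hTN, Matrix.mul_neg]

lemma mul_mul_eq_self_of_mul_transpose_eq_add {X Y : Matrix ι ι ℝ} (hX : X.PosSemidef)
    (hY : Y.PosSemidef) {S : Matrix ι κ ℝ} {T : Matrix κ ι ℝ} (hS : S * Sᵀ = X + Y)
    (hTS : T * S = 1) : S * T * Y = Y := by
  classical
  have hYt : Yᵀ = Y := hY.isHermitian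
  have hST : Sᵀ * Tᵀ = 1 := by rw [← transpose_mul, hTS, transpose_one]
  have hker : (X + Y) * (1 - Tᵀ * Sᵀ) = 0 := by
    rw [← hS, Matrix.mul_sub, Matrix.mul_one, Matrix.mul_assoc, ← Matrix.mul_assoc Sᵀ, hST,
      Matrix.one_mul, sub_self]
  have hYker : Y * (1 - Tᵀ * Sᵀ) = 0 := ext_of_mulVec_single fun i => by
    rw [← mulVec_mulVec, zero_mulVec]
    exact mulVec_eq_zero_of_add_mulVec_eq_zero hX hY (by rw [mulVec_mulVec, hker, zero_mulVec])
  rw [Matrix.mul_sub, Matrix.mul_one, sub_eq_zero] at hYker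
  simpa only [transpose_mul, transpose_transpose, hYt] using (congrArg transpose hYker).symm

lemma dotProduct_self_le_of_mulVec_eq {X Y : Matrix ι ι ℝ} (hX : X.PosSemidef)
    (hY : Y.PosSemidef) {S : Matrix ι κ ℝ} {T : Matrix κ ι ℝ} (hS : S * Sᵀ = X + Y)
    (hTS : T * S = 1) {c : ι → ℝ} {g : κ → ℝ} (hg : S *ᵥ g = Y *ᵥ c) :
    g ⬝ᵥ g ≤ c ⬝ᵥ S *ᵥ g := by
  have hYt : Yᵀ = Y := hY.isHermitian
  obtain ⟨x, hSx⟩ : ∃ x, Sᵀ *ᵥ x = g :=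
    ⟨Tᵀ *ᵥ g, by rw [mulVec_mulVec, ← transpose_mul, hTS, transpose_one, one_mulVec]⟩
  have hxYc : x ⬝ᵥ Y *ᵥ c = g ⬝ᵥ g := by
    rw [← hg, dotProduct_mulVec, ← mulVec_transpose, hSx]
  have hcYx : c ⬝ᵥ Y *ᵥ x = g ⬝ᵥ g := by
    rw [dotProduct_mulVec, ← mulVec_transpose, hYt, dotProduct_comm, hxYc]
  have hxXYx : x ⬝ᵥ X *ᵥ x + x ⬝ᵥ Y *ᵥ x = g ⬝ᵥ g := by
    rw [← dotProduct_add, ← add_mulVec, ← hS, ← mulVec_mulVec, dotProduct_mulVec,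
      ← mulVec_transpose, hSx]
  have hXx : 0 ≤ x ⬝ᵥ X *ᵥ x := hX.dotProduct_mulVec_nonneg x
  have hYxc : 0 ≤ (x - c) ⬝ᵥ Y *ᵥ (x - c) := hY.dotProduct_mulVec_nonneg (x - c)
  rw [mulVec_sub, sub_dotProduct, dotProduct_sub, dotProduct_sub, hxYc, hcYx] at hYxc
  rw [hg]
  linarith

end LyapunovFactor

section SumOfLyapunovForms

variable {ι κ : Type*} [Fintype ι] [DecidableEq ι] [Fintype κ]

lemma eq_zero_of_sum_le_sum_mul {a ρ : κ → ℝ} (ha : ∀ k, 0 ≤ a k) (hρ : ∀ k, ρ k < 1)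
    (hsum : ∑ k, a k ≤ ∑ k, a k * ρ k) (k : κ) : a k = 0 := by
  by_contra hk
  refine hsum.not_gt (Finset.sum_lt_sum (fun j _ => ?_) ⟨k, Finset.mem_univ k, ?_⟩)
  · exact mul_le_of_le_one_right (ha j) (hρ j).le
  · exact mul_lt_of_lt_one_right ((ha k).lt_of_ne' hk) (hρ k)

lemma HasNoImaginaryEigenvalue.map_mulVec_eq_smul_of_eigenvector {A : Matrix ι ι ℝ}
    (hA : HasNoImaginaryEigenvalue A) {b : ι → ℝ} {g : κ → ℝ} {S : Matrix ι κ ℝ}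
    {K : Matrix κ κ ℝ} (hSK : A * S - vecMulVec b g = S * K) {ω : ℝ} {u : κ → ℂ}
    (hu : K.map (algebraMap ℝ ℂ) *ᵥ u = (Complex.I * ω) • u) :
    S.map (algebraMap ℝ ℂ) *ᵥ u =
      ((algebraMap ℝ ℂ ∘ g) ⬝ᵥ u) • ((imagPencil A ω)⁻¹ *ᵥ (algebraMap ℝ ℂ ∘ b)) := by
  have hvec : (vecMulVec b g).map (algebraMap ℝ ℂ) =
      vecMulVec (algebraMap ℝ ℂ ∘ b) (algebraMap ℝ ℂ ∘ g) := by
    ext i j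
    simp [vecMulVec_apply]
  have hmap := congrArg (fun M : Matrix ι κ ℝ => M.map (algebraMap ℝ ℂ) *ᵥ u) hSK
  simp only [Matrix.map_sub _ (map_sub (algebraMap ℝ ℂ)), Matrix.map_mul, sub_mulVec, hvec,
    ← mulVec_mulVec, hu, mulVec_smul, vecMulVec_mulVec, op_smul_eq_smul] at hmap
  have hpencil : imagPencil A ω *ᵥ (S.map (algebraMap ℝ ℂ) *ᵥ u) =
      ((algebraMap ℝ ℂ ∘ g) ⬝ᵥ u) • (algebraMap ℝ ℂ ∘ b) := by
    rw [imagPencil, sub_mulVec, smul_mulVec, one_mulVec, ← hmap, sub_sub_cancel]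
  rw [← mulVec_smul, ← hpencil, mulVec_mulVec, nonsing_inv_mul _ (hA.isUnit_det_imagPencil ω),
    one_mulVec]

lemma HasNoImaginaryEigenvalue.eq_zero_of_mul_sub_vecMulVec_eq_mul {A : Matrix ι ι ℝ}
    (hA : HasNoImaginaryEigenvalue A) {b c : ι → ℝ}
    (hG : ∀ ω, (freqResponse A b c ω).re < 1) {g : κ → ℝ} {S : Matrix ι κ ℝ} {K : Matrix κ κ ℝ}
    (hK : Kᵀ = -K) (hSK : A * S - vecMulVec b g = S * K) (hg : g ⬝ᵥ g ≤ c ⬝ᵥ S *ᵥ g) :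
    S = 0 := by
  classical
  have hKℂ : (K.map (algebraMap ℝ ℂ))ᴴ = -K.map (algebraMap ℝ ℂ) := by
    ext i j
    have hij : K j i = -K i j := congrFun (congrFun hK i) j
    simp [hij]
  obtain ⟨U, ω, hU, hKU⟩ := exists_unitary_of_conjTranspose_eq_neg hKℂ
  set γ : κ → ℂ := fun k => (algebraMap ℝ ℂ ∘ g) ⬝ᵥ U.col k
  have hSU (k : κ) : S.map (algebraMap ℝ ℂ) *ᵥ U.col k =
      γ k • ((imagPencil A (ω k))⁻¹ *ᵥ (algebraMap ℝ ℂ ∘ b)) :=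
    hA.map_mulVec_eq_smul_of_eigenvector hSK (hKU k)
  have hparseval (a : κ → ℝ) :
      ∑ k, (((algebraMap ℝ ℂ ∘ a) ⬝ᵥ U.col k) * star (γ k)).re = a ⬝ᵥ g := by
    rw [← Complex.re_sum, sum_dotProduct_col_mul_star hU]
    simp [dotProduct]
  have hnorm : ∑ k, Complex.normSq (γ k) = g ⬝ᵥ g := by
    rw [← hparseval]
    exact Finset.sum_congr rfl fun k _ => (congrArg Complex.re (Complex.mul_conj (γ k))).symm
  have hresp : ∑ k, Complex.normSq (γ k) * (freqResponse A b c (ω k)).re = c ⬝ᵥ S *ᵥ g := by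
    rw [dotProduct_mulVec, ← hparseval]
    refine Finset.sum_congr rfl fun k _ => ?_
    have hcS : algebraMap ℝ ℂ ∘ (c ᵥ* S) = (algebraMap ℝ ℂ ∘ c) ᵥ* S.map (algebraMap ℝ ℂ) :=
      funext fun i => RingHom.map_vecMul _ _ _ _
    rw [hcS, ← dotProduct_mulVec, hSU, dotProduct_smul, smul_eq_mul, mul_right_comm]
    rw [← Complex.re_ofReal_mul, ← Complex.mul_conj]
    rfl
  have hγ0 (k : κ) : γ k = 0 := Complex.normSq_eq_zero.mp <|
    eq_zero_of_sum_le_sum_mul (fun _ => Complex.normSq_nonneg _) (fun j => hG (ω j))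
      (by rwa [hnorm, hresp]) k
  have hSU0 : S.map (algebraMap ℝ ℂ) * U = 0 := by
    ext i k
    have hSUk : S.map (algebraMap ℝ ℂ) *ᵥ U.col k = 0 := by rw [hSU, hγ0, zero_smul]
    exact congrFun hSUk i
  have hS0 : S.map (algebraMap ℝ ℂ) = 0 := by
    rw [← Matrix.mul_one (S.map _), ← hU, ← Matrix.mul_assoc, hSU0, Matrix.zero_mul]
  ext i j
  simpa using congrFun (congrFun hS0 i) j

lemma HasNoImaginaryEigenvalue.add_eq_zero_of_re_freqResponse_lt_one {A : Matrix ι ι ℝ}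
    (hA : HasNoImaginaryEigenvalue A) {b c : ι → ℝ} (hG : ∀ ω, (freqResponse A b c ω).re < 1)
    {X Y : Matrix ι ι ℝ} (hX : X.PosSemidef) (hY : Y.PosSemidef)
    (heq : A * X + X * Aᵀ + (A - vecMulVec b c) * Y + Y * (A - vecMulVec b c)ᵀ = 0) :
    X + Y = 0 := by
  obtain ⟨s, S, T, hS, hTS⟩ := exists_mul_conjTranspose_eq_of_posSemidef (hX.add hY)
  rw [conjTranspose_eq_transpose_of_trivial] at hS
  obtain ⟨g, hSg⟩ : ∃ g, S *ᵥ g = Y *ᵥ c :=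
    ⟨(T * Y) *ᵥ c, by
      rw [mulVec_mulVec, ← Matrix.mul_assoc, mul_mul_eq_self_of_mul_transpose_eq_add hX hY hS hTS]⟩
  have hXt : Xᵀ = X := hX.isHermitian
  have hYt : Yᵀ = Y := hY.isHermitian
  have hNS : (A * S - vecMulVec b g) * Sᵀ = A * (X + Y) - vecMulVec b (Y *ᵥ c) := by
    rw [Matrix.sub_mul, Matrix.mul_assoc, hS, vecMulVec_mul, vecMul_transpose, hSg]
  have hskew : ((A * S - vecMulVec b g) * Sᵀ)ᵀ = -((A * S - vecMulVec b g) * Sᵀ) := by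
    rw [hNS, eq_neg_iff_add_eq_zero, ← heq]
    simp only [transpose_sub, transpose_mul, transpose_add, transpose_vecMulVec, sub_mul, mul_sub,
      vecMulVec_mul, mul_vecMulVec, hXt, hYt, ← mulVec_transpose]
    noncomm_ring
  obtain ⟨K, hK, hSK⟩ := exists_transpose_eq_neg_and_eq_mul hTS hskew
  rw [← hS, hA.eq_zero_of_mul_sub_vecMulVec_eq_mul hG hK hSK
    (dotProduct_self_le_of_mulVec_eq hX hY hS hTS hSg), Matrix.zero_mul]

lemma exists_vecMulVec_self_add_eq_zero_of_det_eq_zero {A B : Matrix ι ι ℝ} {t : ℝ} (ht : 0 < t)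
    (hdet : (A * B + t • (1 : Matrix ι ι ℝ)).det = 0) :
    ∃ (v w : ι → ℝ), v ≠ 0 ∧ w ≠ 0 ∧
      A * vecMulVec v v + vecMulVec v v * Aᵀ + B * vecMulVec w w + vecMulVec w w * Bᵀ = 0 := by
  obtain ⟨w, hw, hABtw⟩ := exists_mulVec_eq_zero_iff.mpr hdet
  obtain ⟨r, hr, rfl⟩ : ∃ r : ℝ, r ≠ 0 ∧ r ^ 2 = t :=
    ⟨√t, (Real.sqrt_pos.mpr ht).ne', Real.sq_sqrt ht.le⟩
  have hABw : A *ᵥ (B *ᵥ w) = -(r ^ 2 • w) := by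
    rw [add_mulVec, smul_mulVec, one_mulVec, ← mulVec_mulVec] at hABtw
    exact eq_neg_of_add_eq_zero_left hABtw
  set v := r⁻¹ • B *ᵥ w with hv
  have hBw : B *ᵥ w = r • v := by rw [hv, smul_inv_smul₀ hr]
  have hAv : A *ᵥ v = -(r • w) := by
    rw [hv, mulVec_smul, hABw, smul_neg, sq, mul_smul, inv_smul_smul₀ hr]
  refine ⟨v, w, fun hv0 => ?_, hw, ?_⟩
  · rw [hv0, mulVec_zero, zero_eq_neg, smul_eq_zero] at hAv
    exact hAv.elim hr hw
  · simp only [mul_vecMulVec, vecMulVec_mul, vecMul_transpose, hAv, hBw, neg_vecMulVec,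
      vecMulVec_neg, smul_vecMulVec, vecMulVec_smul]
    module

open scoped MatrixOrder in
theorem rank_one_intersection_general {A B : Matrix ι ι ℝ} (hA : HasNoImaginaryEigenvalue A)
    (hB : B.det ≠ 0) (hrank : (A - B).rank ≤ 1) {X Y : Matrix ι ι ℝ} (hXY : X ≠ 0 ∨ Y ≠ 0)
    (hX : X.PosSemidef) (hY : Y.PosSemidef)
    (heq : A * X + X * Aᵀ + B * Y + Y * Bᵀ = 0) :
    ∃ (v w : ι → ℝ), v ≠ 0 ∧ w ≠ 0 ∧
      A * vecMulVec v v + vecMulVec v v * Aᵀ + B * vecMulVec w w + vecMulVec w w * Bᵀ = 0 := by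
  by_contra hno
  have hdet (t : ℝ) (ht : 0 ≤ t) : (A * B + t • (1 : Matrix ι ι ℝ)).det ≠ 0 := by
    obtain rfl | ht := ht.eq_or_lt
    · simpa using ⟨hA.det_ne_zero, hB⟩
    · exact fun h0 => hno (exists_vecMulVec_self_add_eq_zero_of_det_eq_zero ht h0)
  obtain ⟨b, c, hbc⟩ := exists_vecMulVec_of_rank_le_one hrank
  obtain rfl : B = A - vecMulVec b c := by rw [← hbc, sub_sub_cancel]
  have hG (ω : ℝ) : (freqResponse A b c ω).re < 1 :=
    hA.re_freqResponse_lt_one <| det_add_smul_one_pos fun t ht => hdet t ((sq_nonneg ω).trans ht)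
  have hsum : X + Y = 0 := hA.add_eq_zero_of_re_freqResponse_lt_one hG hX hY heq
  obtain ⟨rfl, rfl⟩ := (add_eq_zero_iff_of_nonneg hX.nonneg hY.nonneg).mp hsum
  simp at hXY

end SumOfLyapunovForms

/-- If stable `A`, `B` with `A - B` of rank one admit nonzero positive semidefinite `X`, `Y`
with `A·X + X·Aᵀ + B·Y + Y·Bᵀ = 0`, then rank-one solutions `v·vᵀ`, `w·wᵀ` also exist. -/
theorem rank_one_intersection {n : ℕ} (A B : Matrix (Fin n) (Fin n) ℝ)
    (hA : IsStable A) (hB : IsStable B) (hrank : (A - B).rank = 1)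
    (X Y : Matrix (Fin n) (Fin n) ℝ) (hX0 : X ≠ 0) (hY0 : Y ≠ 0)
    (hX : X.PosSemidef) (hY : Y.PosSemidef)
    (heq : A * X + X * Aᵀ + B * Y + Y * Bᵀ = 0) :
    ∃ (v w : Fin n → ℝ), v ≠ 0 ∧ w ≠ 0 ∧
      A * vecMulVec v v + vecMulVec v v * Aᵀ + B * vecMulVec w w + vecMulVec w w * Bᵀ = 0 :=
  rank_one_intersection_general hA.hasNoImaginaryEigenvalue
    hB.hasNoImaginaryEigenvalue.det_ne_zero hrank.le (.inl hX0) hX hY heq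
end
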